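/- arXiv:2605.31448 — 7 statements merged into one kernel-verified Lean document; each statement's English description precedes it below -/
import Mathlib

section
/- Decoder correctness of the randomized encoding: for every matrix M ∈ F_2^{q×m}, every input x ∈ F_2^m and all mask values r, s, writing (w, z) = RE_M(x; r, s), for every row i ∈ {1,…,q} one has (⊕_{j=1}^m z_{i,j}) ⊕ (⊕_{j=1}^m M_{i,j}·a_{j,i}(w)) = (Mx)_i. Hence the deterministic map sending (w,z) to the vector with i-th coordinate (⊕_j z_{i,j}) ⊕ (⊕_j M_{i,j} a_{j,i}(w)) recovers Mx from RE_M(x; r, s). -/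
open Finset

/-- Boundary-extended horizontal mask: `sBext m s i k` is the 1-based `s_{i,k}`
for `k ∈ {1,…,m-1}`, with the boundary convention `s_{i,0} = s_{i,m} = 0`. -/
def sBext (m : ℕ) {q : ℕ} (s : Fin q → Fin (m - 1) → ZMod 2) (i : Fin q) (k : ℕ) :
    ZMod 2 :=
  if h : 1 ≤ k ∧ k ≤ m - 1 then s i ⟨k - 1, by omega⟩ else 0

/-- `REw x r j i` is the output bit `w_{j+1,i}` (1-based column `j+1`, `w`-index
`i ∈ {0,…,q-1}`): `w_{j,0} = x_j ⊕ r_{j,1}` and `w_{j,i} = r_{j,i} ⊕ r_{j,i+1}`;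
here `r j i` denotes `r_{j+1,i+1}` in the 1-based notation. -/
def REw {m q : ℕ} (x : Fin m → ZMod 2) (r : Fin m → Fin q → ZMod 2) :
    Fin m → Fin q → ZMod 2 :=
  fun j i =>
    (if (i : ℕ) = 0 then x j
      else r j ⟨(i : ℕ) - 1, Nat.lt_of_le_of_lt (Nat.sub_le _ _) i.isLt⟩) + r j i

/-- `REz M r s i j` is the output bit `z_{i+1,j+1}` (1-based):
`z_{i,j} = s_{i,j-1} ⊕ s_{i,j} ⊕ M_{i,j}·r_{j,i}`. -/
def REz {m q : ℕ} (M : Fin q → Fin m → ZMod 2) (r : Fin m → Fin q → ZMod 2)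
    (s : Fin q → Fin (m - 1) → ZMod 2) : Fin q → Fin m → ZMod 2 :=
  fun i j => sBext m s i (j : ℕ) + sBext m s i ((j : ℕ) + 1) + M i j * r j i

/-- `aFun w j i = w_{j,0} ⊕ ⋯ ⊕ w_{j,i}` (0-based `i : Fin q`), i.e. the prefix
parity `a_{j,i+1}` in the 1-based notation of the paper. -/
def aFun {m q : ℕ} (w : Fin m → Fin q → ZMod 2) (j : Fin m) (i : Fin q) : ZMod 2 :=
  ∑ k ∈ Finset.Iic i, w j k

theorem aux_aFun {m q : ℕ} (x : Fin m → ZMod 2) (r : Fin m → Fin q → ZMod 2) (j : Fin m) :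
    ∀ (n : ℕ) (hn : n < q), aFun (REw x r) j ⟨n, hn⟩ = x j + r j ⟨n, hn⟩ := by
  intro n
  induction n with
  | zero =>
    intro hn
    have h : Finset.Iic (⟨0, hn⟩ : Fin q) = {⟨0, hn⟩} := by
      ext k
      simp [Fin.le_def, Fin.ext_iff]
    simp [aFun, h, REw]
  | succ n ih =>
    intro hn
    have h : Finset.Iic (⟨n + 1, hn⟩ : Fin q)
        = insert ⟨n + 1, hn⟩ (Finset.Iic ⟨n, by omega⟩) := by
      ext k
      simp only [Finset.mem_Iic, Finset.mem_insert, Fin.le_def, Fin.ext_iff]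
      omega
    have ih' := ih (by omega)
    unfold aFun at ih' ⊢
    rw [h, Finset.sum_insert (by simp [Fin.le_def]), ih']
    simp only [REw, Nat.add_sub_cancel, Nat.succ_ne_zero, if_false]
    have h2 := CharTwo.add_self_eq_zero (r j ⟨n, by omega⟩)
    linear_combination h2

theorem aux_tel (f : ℕ → ZMod 2) (n : ℕ) :
    ∑ k ∈ Finset.range n, (f k + f (k + 1)) = f 0 + f n := by
  induction n with
  | zero => simp [CharTwo.add_self_eq_zero]
  | succ n ih =>
    rw [Finset.sum_range_succ, ih]
    linear_combination CharTwo.add_self_eq_zero (f n)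

/-- Decoder correctness of the randomized encoding: for every
matrix `M ∈ F_2^{q×m}`, every input `x` and all masks `r, s`, writing
`(w, z) = RE_M(x; r, s)`, for every row `i` one has
`(⊕_j z_{i,j}) ⊕ (⊕_j M_{i,j}·a_{j,i}(w)) = (Mx)_i`; hence the deterministic
map sending `(w, z)` to the vector with those coordinates recovers `Mx`. -/
theorem decoder_correctness {m q : ℕ} (hm : 1 ≤ m) (hq : 1 ≤ q)
    (M : Fin q → Fin m → ZMod 2) (x : Fin m → ZMod 2)
    (r : Fin m → Fin q → ZMod 2) (s : Fin q → Fin (m - 1) → ZMod 2) :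
    (∀ i : Fin q,
        (∑ j, REz M r s i j) + (∑ j, M i j * aFun (REw x r) j i)
          = ∑ j, M i j * x j) ∧
      (fun i : Fin q =>
          (∑ j, REz M r s i j) + (∑ j, M i j * aFun (REw x r) j i))
        = (fun i : Fin q => ∑ j, M i j * x j) := by
  have key : ∀ i : Fin q,
      (∑ j, REz M r s i j) + (∑ j, M i j * aFun (REw x r) j i)
        = ∑ j, M i j * x j := by
    intro i
    have h1 : ∑ j : Fin m, (sBext m s i (j : ℕ) + sBext m s i ((j : ℕ) + 1)) = 0 := by
      rw [Fin.sum_univ_eq_sum_range (fun k => sBext m s i k + sBext m s i (k + 1)) m,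
        aux_tel]
      have h0 : sBext m s i 0 = 0 := by simp [sBext]
      have hmm : sBext m s i m = 0 := by
        unfold sBext
        rw [dif_neg (by omega)]
      rw [h0, hmm, add_zero]
    simp only [REz]
    rw [Finset.sum_add_distrib, h1, zero_add, ← Finset.sum_add_distrib]
    refine Finset.sum_congr rfl fun j _ => ?_
    rw [aux_aFun x r j i.1 i.2]
    linear_combination CharTwo.add_self_eq_zero (M i j * r j i)
  exact ⟨key, funext key⟩
end

section
/- Perfect privacy of the randomized encoding: fix a matrix M ∈ F_2^{q×m} and let R be uniform on F_2^{mq} and S be uniform on F_2^{q(m−1)}, independent. Then for any two inputs x, x' ∈ F_2^m with Mx = Mx', the distribution of RE_M(x; R, S) equals the distribution of RE_M(x'; R, S). -/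
open Finset

/-- The product of two probability mass functions (joint distribution of a pair
of independent random variables). -/
noncomputable def pmfProd {α β : Type*} (p : PMF α) (p' : PMF β) : PMF (α × β) :=
  p.bind fun a => p'.map fun b => (a, b)

theorem map_uniform_equiv {α : Type*} [Fintype α] [Nonempty α] (e : α ≃ α) :
    (PMF.uniformOfFintype α).map e = PMF.uniformOfFintype α := by
  classical
  ext a
  rw [PMF.map_apply, tsum_eq_single (e.symm a)]
  · simp
  · intro b hb
    rw [if_neg]
    intro h
    exact hb (by simp [h])

/-- Partial row sums. -/
def prefP {m q : ℕ} (M : Fin q → Fin m → ZMod 2) (d : Fin m → ZMod 2) (i : Fin q) (k : ℕ) :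
    ZMod 2 := ∑ j : Fin m, if (j : ℕ) < k then M i j * d j else 0

theorem prefP_succ {m q : ℕ} (M : Fin q → Fin m → ZMod 2) (d : Fin m → ZMod 2) (i : Fin q)
    (j : Fin m) : prefP M d i ((j : ℕ) + 1) = prefP M d i j + M i j * d j := by
  have h : M i j * d j = ∑ l : Fin m, if l = j then M i l * d l else 0 := by simp
  rw [h]
  unfold prefP
  rw [← Finset.sum_add_distrib]
  refine Finset.sum_congr rfl fun l _ => ?_
  rcases lt_trichotomy (l : ℕ) j with h1 | h1 | h1
  · have : l ≠ j := fun h => by subst h; omega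
    simp [this, h1, Nat.lt_succ_of_lt h1]
  · have : l = j := Fin.ext h1
    simp [this]
  · have h2 : l ≠ j := fun h => by subst h; omega
    have h3 : ¬ (l : ℕ) < j + 1 := by omega
    have h4 : ¬ (l : ℕ) < j := by omega
    rw [if_neg h3, if_neg h4, if_neg h2, add_zero]

theorem sBext_shift {m q : ℕ} (M : Fin q → Fin m → ZMod 2) (d : Fin m → ZMod 2)
    (hd : ∀ i, ∑ j, M i j * d j = 0) (s : Fin q → Fin (m - 1) → ZMod 2) (i : Fin q) (k : ℕ)
    (hk : k ≤ m) :
    sBext m (s + fun (i : Fin q) (k : Fin (m - 1)) => prefP M d i ((k : ℕ) + 1)) i k = sBext m s i k + prefP M d i k := by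
  unfold sBext
  split_ifs with h
  · simp [Nat.sub_add_cancel h.1]
  · have : k = 0 ∨ k = m := by omega
    rcases this with rfl | rfl
    · simp [prefP]
    · simp [prefP, hd]

/-- Perfect privacy of the randomized encoding: with `R`
uniform on `F_2^{mq}` and `S` uniform on `F_2^{q(m−1)}`, independent, for any
two inputs `x, x'` with `Mx = Mx'` the distribution of `RE_M(x; R, S)` equals
the distribution of `RE_M(x'; R, S)`. -/
theorem perfect_privacy {m q : ℕ} (hm : 1 ≤ m) (hq : 1 ≤ q)
    (M : Fin q → Fin m → ZMod 2) (x x' : Fin m → ZMod 2)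
    (hxx : ∀ i : Fin q, ∑ j, M i j * x j = ∑ j, M i j * x' j) :
    (pmfProd (PMF.uniformOfFintype (Fin m → Fin q → ZMod 2))
          (PMF.uniformOfFintype (Fin q → Fin (m - 1) → ZMod 2))).map
        (fun rs => (REw x rs.1, REz M rs.1 rs.2))
      = (pmfProd (PMF.uniformOfFintype (Fin m → Fin q → ZMod 2))
          (PMF.uniformOfFintype (Fin q → Fin (m - 1) → ZMod 2))).map
        (fun rs => (REw x' rs.1, REz M rs.1 rs.2)) := by
  classical
  set d : Fin m → ZMod 2 := fun j => x j - x' j with hdd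
  have hd : ∀ i, ∑ j, M i j * d j = 0 := by
    intro i
    simp [hdd, mul_sub, Finset.sum_sub_distrib, hxx i]
  have c2 : ∀ a : ZMod 2, a + a = 0 := fun a => CharTwo.add_self_eq_zero a
  set dR : Fin m → Fin q → ZMod 2 := fun j _ => d j with hdR
  set dS : Fin q → Fin (m - 1) → ZMod 2 := fun i k => prefP M d i ((k : ℕ) + 1) with hdS
  have hw : ∀ r, REw x' (r + dR) = REw x r := by
    intro r
    funext j i
    unfold REw
    split_ifs with h
    · simp [hdR, hdd]
      ring
    · simp only [Pi.add_apply, hdR]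
      linear_combination c2 (d j)
  have hz : ∀ r s, REz M (r + dR) (s + dS) = REz M r s := by
    intro r s
    funext i j
    unfold REz
    rw [hdS, sBext_shift M d hd s i j (by omega), sBext_shift M d hd s i (j + 1) (by omega),
      prefP_succ]
    simp only [Pi.add_apply, hdR]
    linear_combination c2 (prefP M d i j) + c2 (M i j * d j)
  conv_rhs =>
    rw [← map_uniform_equiv (Equiv.addRight dR), ← map_uniform_equiv (Equiv.addRight dS)]
  unfold pmfProd
  simp only [PMF.map_bind, PMF.bind_map, PMF.map_comp]
  congr 1
  funext r
  simp only [Function.comp_def, PMF.map_comp, Equiv.coe_addRight, hw, hz]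
end

section
/- Simulator correctness / conditional structure of the z-register: fix a matrix M ∈ F_2^{q×m}, an input x ∈ F_2^m, and let R be uniform on F_2^{mq} and S uniform on F_2^{q(m−1)}, independent. Write (W, Z) = RE_M(x; R, S). Then for every w ∈ F_2^{mq}, the conditional distribution of Z given W = w equals the product over rows i ∈ {1,…,q} of the uniform distribution on the parity class { z_i ∈ F_2^m : ⊕_{j=1}^m z_{i,j} = (Mx)_i ⊕ σ_i(w) }, where σ_i(w) = ⊕_{j=1}^m M_{i,j}·a_{j,i}(w). -/
open Finset

open scoped ENNReal

theorem aux_char2 (a b : ZMod 2) : a + (a + b) = b := by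
  rw [← add_assoc, CharTwo.add_self_eq_zero, zero_add]

theorem aFun_zero {m q : ℕ} (w : Fin m → Fin q → ZMod 2) (j : Fin m) (h : 0 < q) :
    aFun w j ⟨0, h⟩ = w j ⟨0, h⟩ := by
  unfold aFun
  have : Finset.Iic (⟨0, h⟩ : Fin q) = {⟨0, h⟩} := by
    ext k; simp [Fin.le_def, Fin.ext_iff]
  rw [this, Finset.sum_singleton]

theorem aFun_succ {m q : ℕ} (w : Fin m → Fin q → ZMod 2) (j : Fin m) (n : ℕ)
    (h : n + 1 < q) :
    aFun w j ⟨n + 1, h⟩ = w j ⟨n + 1, h⟩ + aFun w j ⟨n, by omega⟩ := by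
  unfold aFun
  have : Finset.Iic (⟨n + 1, h⟩ : Fin q)
      = insert ⟨n + 1, h⟩ (Finset.Iic (⟨n, by omega⟩ : Fin q)) := by
    ext k; simp only [Finset.mem_Iic, Finset.mem_insert, Fin.le_def, Fin.ext_iff]; omega
  rw [this, Finset.sum_insert (by simp [Fin.le_def])]

theorem REw_iff {m q : ℕ} (x : Fin m → ZMod 2) (r w : Fin m → Fin q → ZMod 2) :
    REw x r = w ↔ r = fun j i => x j + aFun w j i := by
  constructor
  · rintro rfl
    funext j ⟨i, hi⟩
    induction i with
    | zero =>
      rw [aFun_zero]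
      simp [REw, aux_char2]
    | succ n ih =>
      rw [aFun_succ, add_left_comm, ← ih (by omega)]
      simp only [REw]
      simp only [Nat.add_eq_zero_iff, one_ne_zero, and_false, if_false, Nat.add_sub_cancel]
      have h2 := CharTwo.add_self_eq_zero (r j ⟨n, by omega⟩)
      linear_combination -h2
  · rintro rfl
    funext j ⟨i, hi⟩
    cases i with
    | zero => simp [REw, aFun_zero, aux_char2]
    | succ n =>
      simp only [REw, aFun_succ]
      simp only [Nat.add_eq_zero_iff, one_ne_zero, and_false, if_false, Nat.add_sub_cancel]
      have h1 := CharTwo.add_self_eq_zero (x j)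
      have h2 := CharTwo.add_self_eq_zero (aFun w j ⟨n, by omega⟩)
      linear_combination h1 + h2

def prefY {m : ℕ} (y : Fin m → ZMod 2) (k : ℕ) : ZMod 2 :=
  ∑ n ∈ Finset.range k, if h : n < m then y ⟨n, h⟩ else 0

theorem prefY_last {m : ℕ} (y : Fin m → ZMod 2) : prefY y m = ∑ j, y j := by
  unfold prefY
  rw [Finset.sum_range]
  simp

theorem prefY_succ {m : ℕ} (y : Fin m → ZMod 2) (k : ℕ) (h : k < m) :
    prefY y (k + 1) = prefY y k + y ⟨k, h⟩ := by
  unfold prefY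
  rw [Finset.sum_range_succ, dif_pos h]

theorem sB_iff {m q : ℕ} (hm : 1 ≤ m) (s : Fin q → Fin (m - 1) → ZMod 2) (i : Fin q)
    (y : Fin m → ZMod 2) :
    (∀ j : Fin m, sBext m s i (j : ℕ) + sBext m s i ((j : ℕ) + 1) = y j) ↔
      ((∑ j, y j) = 0 ∧ s i = fun k : Fin (m - 1) => prefY y ((k : ℕ) + 1)) := by
  have hlast : sBext m s i m = 0 := by
    unfold sBext; rw [dif_neg]; omega
  have h0 : sBext m s i 0 = 0 := by
    unfold sBext; rw [dif_neg]; omega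
  constructor
  · intro H
    have key : ∀ k, k ≤ m → sBext m s i k = prefY y k := by
      intro k
      induction k with
      | zero => intro _; rw [h0]; simp [prefY]
      | succ n ih =>
        intro hn
        rw [prefY_succ y n hn, ← H ⟨n, hn⟩, ← ih (by omega), aux_char2]
    refine ⟨?_, ?_⟩
    · rw [← prefY_last, ← key m le_rfl, hlast]
    · funext k
      rw [← key _ (by omega)]
      unfold sBext
      rw [dif_pos (by omega)]
      rfl
  · rintro ⟨hs, hk⟩
    have key : ∀ k, k ≤ m → sBext m s i k = prefY y k := by
      intro k hkm
      rcases Nat.eq_zero_or_pos k with rfl | hpos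
      · rw [h0]; simp [prefY]
      rcases Nat.eq_or_lt_of_le hkm with rfl | hlt
      · rw [hlast, prefY_last, hs]
      · unfold sBext
        rw [dif_pos (by omega), hk]
        simp only
        congr 1
        omega
    rintro ⟨j, hj⟩
    simp only
    rw [key j hj.le, key (j + 1) hj, prefY_succ y j hj, aux_char2]

theorem REz_iff {m q : ℕ} (hm : 1 ≤ m) (M : Fin q → Fin m → ZMod 2)
    (r : Fin m → Fin q → ZMod 2) (s : Fin q → Fin (m - 1) → ZMod 2)
    (z : Fin q → Fin m → ZMod 2) :
    REz M r s = z ↔ (∀ i, (∑ j, z i j) = ∑ j, M i j * r j i) ∧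
      s = fun (i : Fin q) (k : Fin (m - 1)) => prefY (fun j => z i j + M i j * r j i) ((k : ℕ) + 1) := by
  have h1 : REz M r s = z ↔ ∀ i, ∀ j : Fin m,
      sBext m s i (j : ℕ) + sBext m s i ((j : ℕ) + 1) = z i j + M i j * r j i := by
    simp only [funext_iff, REz]
    refine forall_congr' fun i => forall_congr' fun j => ?_
    rw [← CharTwo.sub_eq_add (z i j), eq_sub_iff_add_eq]
  rw [h1, funext_iff, ← forall_and]
  refine forall_congr' fun i => ?_
  rw [sB_iff hm s i (fun j => z i j + M i j * r j i), Finset.sum_add_distrib,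
    CharTwo.add_eq_zero]

theorem pmfProd_apply' {α β : Type*} (p : PMF α) (p' : PMF β) (a : α) (b : β) :
    pmfProd p p' (a, b) = p a * p' b := by
  classical
  unfold pmfProd
  rw [PMF.bind_apply, tsum_eq_single a]
  · rw [PMF.map_apply, tsum_eq_single b]
    · simp
    · intro b' hb; simp [hb.symm]
  · intro a' ha
    rw [PMF.map_apply]
    simp [ha.symm]

theorem map_apply_unique {α β : Type*} (p : PMF α) (f : α → β) (y : β) (P : Prop) [Decidable P]
    (a : α) (h : ∀ a', f a' = y ↔ P ∧ a' = a) : p.map f y = if P then p a else 0 := by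
  classical
  rw [PMF.map_apply, tsum_eq_single a]
  · have := h a
    simp only [and_true] at this
    simp only [eq_comm (a := y), this]
  · intro b hb
    rw [if_neg]
    intro e
    exact hb ((h b).1 e.symm).2

/-- Simulator correctness / conditional structure of the
z-register: with `R, S` uniform and independent and `(W, Z) = RE_M(x; R, S)`,
for every `w` the conditional distribution of `Z` given `W = w` is the product
over rows `i` of the uniform distribution on the parity class
`{ z_i : ⊕_j z_{i,j} = (Mx)_i ⊕ σ_i(w) }`, where
`σ_i(w) = ⊕_j M_{i,j}·a_{j,i}(w)`. Equivalently (as stated here), since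
`P(W = w) = 2^{-mq}`, the joint probability of `(w, z)` factors as
`2^{-mq}` times the product over rows of the parity-class uniform weights
`1_{parity}·2^{-(m-1)}`. -/
theorem conditional_z_given_w {m q : ℕ} (hm : 1 ≤ m) (hq : 1 ≤ q)
    (M : Fin q → Fin m → ZMod 2) (x : Fin m → ZMod 2)
    (γ : PMF ((Fin m → Fin q → ZMod 2) × (Fin q → Fin m → ZMod 2)))
    (hγ : γ = (pmfProd (PMF.uniformOfFintype (Fin m → Fin q → ZMod 2))
          (PMF.uniformOfFintype (Fin q → Fin (m - 1) → ZMod 2))).map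
        (fun rs => (REw x rs.1, REz M rs.1 rs.2))) :
    ∀ (w : Fin m → Fin q → ZMod 2) (z : Fin q → Fin m → ZMod 2),
      γ (w, z)
        = ((2 : ℝ≥0∞) ^ (m * q))⁻¹ *
            ∏ i : Fin q,
              (if (∑ j, z i j)
                  = (∑ j, M i j * x j) + ∑ j, M i j * aFun w j i
                then ((2 : ℝ≥0∞) ^ (m - 1))⁻¹ else 0) := by
  classical
  intro w z
  subst hγ
  set r0 : Fin m → Fin q → ZMod 2 := fun j i => x j + aFun w j i with hr0
  rw [map_apply_unique _ _ _
    (∀ i, (∑ j, z i j) = (∑ j, M i j * x j) + ∑ j, M i j * aFun w j i)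
    (r0, fun (i : Fin q) (k : Fin (m - 1)) => prefY (fun j => z i j + M i j * r0 j i) ((k : ℕ) + 1))]
  · rw [pmfProd_apply', PMF.uniformOfFintype_apply, PMF.uniformOfFintype_apply]
    split_ifs with hP
    · rw [Finset.prod_congr rfl (fun i _ => if_pos (hP i))]
      simp only [Fintype.card_fun, ZMod.card, Fintype.card_fin, Finset.prod_const,
        Finset.card_univ, Nat.cast_pow, Nat.cast_ofNat, ENNReal.inv_pow, ← pow_mul]
      rw [mul_comm q m]
    · push Not at hP
      obtain ⟨i, hi⟩ := hP
      rw [Finset.prod_eq_zero (Finset.mem_univ i) (if_neg hi), mul_zero]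
  · rintro ⟨r, s⟩
    simp only [Prod.mk.injEq]
    rw [REw_iff, REz_iff hm, ← hr0]
    have e : ∀ i, ∑ j, M i j * r0 j i = (∑ j, M i j * x j) + ∑ j, M i j * aFun w j i := by
      intro i
      simp only [hr0, mul_add, Finset.sum_add_distrib]
    constructor
    · rintro ⟨rfl, h1, h2⟩
      exact ⟨fun i => (h1 i).trans (e i), rfl, h2⟩
    · rintro ⟨h1, rfl, h2⟩
      exact ⟨rfl, fun i => (h1 i).trans (e i).symm, h2⟩
end

section
/- Bounded fan-in and bounded fan-out of the randomized encoding: fix a matrix M ∈ F_2^{q×m} and view RE_M as a function of the source vector (x, r, s) ∈ F_2^m × F_2^{mq} × F_2^{q(m−1)}. Then (i) for every output coordinate of RE_M, the set of source coordinates t such that flipping coordinate t of some source vector changes that output coordinate has size at most 3; and (ii) for every source coordinate t, the set of output coordinates that change when coordinate t of some source vector is flipped has size at most 3. -/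
open Finset

/-- The index type of the source coordinates `(x, r, s)` of the randomized
encoding. -/
abbrev SrcIdx (m q : ℕ) := Fin m ⊕ (Fin m × Fin q) ⊕ (Fin q × Fin (m - 1))

/-- The index type of the output coordinates `(w, z)` of the randomized
encoding: `w_{j,i}` for `j ∈ [m]`, `0 ≤ i ≤ q−1`, and `z_{i,j}` for
`i ∈ [q]`, `j ∈ [m]`. -/
abbrev OutIdx (m q : ℕ) := (Fin m × Fin q) ⊕ (Fin q × Fin m)

/-- The randomized encoding viewed as a single function of the source vector. -/
def REfull {m q : ℕ} (M : Fin q → Fin m → ZMod 2)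
    (v : SrcIdx m q → ZMod 2) : OutIdx m q → ZMod 2 :=
  fun o =>
    match o with
    | Sum.inl (j, i) =>
        REw (fun j => v (Sum.inl j)) (fun j i => v (Sum.inr (Sum.inl (j, i)))) j i
    | Sum.inr (i, j) =>
        REz M (fun j i => v (Sum.inr (Sum.inl (j, i))))
          (fun i k => v (Sum.inr (Sum.inr (i, k)))) i j

/-- Flip coordinate `t` of a source vector: add `1 ∈ F_2` to that coordinate
while keeping all other coordinates fixed. -/
def flipAt {ι : Type*} [DecidableEq ι] (v : ι → ZMod 2) (t : ι) : ι → ZMod 2 :=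
  Function.update v t (v t + 1)

def DepRel {m q : ℕ} : SrcIdx m q → OutIdx m q → Prop
  | Sum.inl j, Sum.inl (j', i') => j = j' ∧ (i' : ℕ) = 0
  | Sum.inl _, Sum.inr _ => False
  | Sum.inr (Sum.inl (j, i)), Sum.inl (j', i') =>
      j = j' ∧ ((i' : ℕ) = i ∨ (i' : ℕ) = i + 1)
  | Sum.inr (Sum.inl (j, i)), Sum.inr (i', j') => j = j' ∧ i = i'
  | Sum.inr (Sum.inr _), Sum.inl _ => False
  | Sum.inr (Sum.inr (i, k)), Sum.inr (i', j') =>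
      i = i' ∧ ((j' : ℕ) = k ∨ (j' : ℕ) = k + 1)

theorem flipAt_of_ne {ι : Type*} [DecidableEq ι] (v : ι → ZMod 2) {t a : ι} (h : a ≠ t) :
    flipAt v t a = v a := by
  simp [flipAt, h]

theorem depRel_of_ne {m q : ℕ} (M : Fin q → Fin m → ZMod 2) (t : SrcIdx m q) (o : OutIdx m q)
    (v : SrcIdx m q → ZMod 2) (h : REfull M (flipAt v t) o ≠ REfull M v o) : DepRel t o := by
  by_contra hd
  apply h
  rcases o with ⟨j', i'⟩ | ⟨i', j'⟩
  · have h1 : flipAt v t (Sum.inr (Sum.inl (j', i'))) = v (Sum.inr (Sum.inl (j', i'))) := by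
      apply flipAt_of_ne
      rintro rfl
      simp [DepRel] at hd
    simp only [REfull, REw, h1]
    split_ifs with h0
    · rw [flipAt_of_ne]
      rintro rfl
      simp [DepRel, h0] at hd
    · rw [flipAt_of_ne]
      rintro rfl
      simp [DepRel] at hd
      omega
  · have h1 : flipAt v t (Sum.inr (Sum.inl (j', i'))) = v (Sum.inr (Sum.inl (j', i'))) := by
      apply flipAt_of_ne
      rintro rfl
      simp [DepRel] at hd
    have h2 : ∀ k : ℕ, (k = j' ∨ k = j' + 1) →
        sBext m (fun i k => flipAt v t (Sum.inr (Sum.inr (i, k)))) i' k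
        = sBext m (fun i k => v (Sum.inr (Sum.inr (i, k)))) i' k := by
      intro k hk
      unfold sBext
      split_ifs with h0
      · apply flipAt_of_ne
        rintro rfl
        simp [DepRel] at hd
        omega
      · rfl
    simp only [REfull, REz, h1]
    rw [h2 _ (Or.inl rfl), h2 _ (Or.inr rfl)]

theorem ncard_le_three {α : Type*} (S : Set α) (f : α → ℕ) (h : ∀ a ∈ S, f a < 3)
    (hi : ∀ a ∈ S, ∀ b ∈ S, f a = f b → a = b) : S.ncard ≤ 3 := by
  have := Set.ncard_le_ncard_of_injOn (s := S) (t := (↑(Finset.range 3) : Set ℕ)) f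
    (by intro a ha; simpa using h a ha) (by intro a ha b hb; exact hi a ha b hb)
    (Finset.finite_toSet _)
  rwa [Set.ncard_coe_finset, Finset.card_range] at this

def codeIn {m q : ℕ} : OutIdx m q → SrcIdx m q → ℕ
  | Sum.inl _, Sum.inl _ => 0
  | Sum.inr _, Sum.inl _ => 0
  | Sum.inl (_, i'), Sum.inr (Sum.inl (_, i)) => if (i : ℕ) = i' then 1 else 2
  | Sum.inr _, Sum.inr (Sum.inl _) => 1
  | Sum.inl _, Sum.inr (Sum.inr _) => 0
  | Sum.inr (_, j'), Sum.inr (Sum.inr (_, k)) => if (k : ℕ) = j' then 0 else 2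

def codeOut {m q : ℕ} : SrcIdx m q → OutIdx m q → ℕ
  | Sum.inl _, _ => 0
  | Sum.inr (Sum.inl (_, i)), Sum.inl (_, i') => if (i : ℕ) = i' then 0 else 1
  | Sum.inr (Sum.inl _), Sum.inr _ => 2
  | Sum.inr (Sum.inr _), Sum.inl _ => 0
  | Sum.inr (Sum.inr (_, k)), Sum.inr (_, j') => if (k : ℕ) = j' then 0 else 1

/-- Bounded fan-in and bounded fan-out of the randomized
encoding: (i) every output coordinate depends on at most 3 source coordinates,
and (ii) every source coordinate influences at most 3 output coordinates
(dependence being measured by whether flipping the coordinate of some source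
vector changes the value). -/
theorem bounded_fanin_fanout {m q : ℕ} (hm : 1 ≤ m) (hq : 1 ≤ q)
    (M : Fin q → Fin m → ZMod 2) :
    (∀ o : OutIdx m q,
        Set.ncard {t : SrcIdx m q |
          ∃ v : SrcIdx m q → ZMod 2, REfull M (flipAt v t) o ≠ REfull M v o} ≤ 3) ∧
      (∀ t : SrcIdx m q,
        Set.ncard {o : OutIdx m q |
          ∃ v : SrcIdx m q → ZMod 2, REfull M (flipAt v t) o ≠ REfull M v o} ≤ 3) := by
  constructor
  · intro o
    apply ncard_le_three _ (codeIn o)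
    · rintro t -
      rcases o with ⟨j', i'⟩ | ⟨i', j'⟩ <;> rcases t with j | ⟨j, i⟩ | ⟨i, k⟩ <;>
        simp only [codeIn] <;> (try split_ifs) <;> omega
    · rintro t ⟨v, hv⟩ t' ⟨v', hv'⟩ he
      have h1 := depRel_of_ne M _ _ _ hv
      have h2 := depRel_of_ne M _ _ _ hv'
      clear hv hv'
      rcases o with ⟨j', i'⟩ | ⟨i', j'⟩ <;> rcases t with j | ⟨j, i⟩ | ⟨i, k⟩ <;>
        rcases t' with a | ⟨a, b⟩ | ⟨a, b⟩ <;>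
        simp only [codeIn, DepRel] at he h1 h2 <;>
        simp only [Sum.inl.injEq, Sum.inr.injEq, Prod.mk.injEq, reduceCtorEq, Fin.ext_iff] at * <;>
        (try split_ifs at he) <;> omega
  · intro t
    apply ncard_le_three _ (codeOut t)
    · rintro o -
      rcases o with ⟨j', i'⟩ | ⟨i', j'⟩ <;> rcases t with j | ⟨j, i⟩ | ⟨i, k⟩ <;>
        simp only [codeOut] <;> (try split_ifs) <;> omega
    · rintro o ⟨v, hv⟩ o' ⟨v', hv'⟩ he
      have h1 := depRel_of_ne M _ _ _ hv
      have h2 := depRel_of_ne M _ _ _ hv'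
      clear hv hv'
      rcases o with ⟨j', i'⟩ | ⟨i', j'⟩ <;> rcases t with j | ⟨j, i⟩ | ⟨i, k⟩ <;>
        rcases o' with ⟨a, b⟩ | ⟨a, b⟩ <;>
        simp only [codeOut, DepRel] at he h1 h2 <;>
        simp only [Sum.inl.injEq, Sum.inr.injEq, Prod.mk.injEq, reduceCtorEq, Fin.ext_iff] at * <;>
        (try split_ifs at he) <;> omega
end

section
/- Conditional entropy of the z-register given the w-register: fix a matrix M ∈ F_2^{q×m}. Let X be a random variable on F_2^m, let R be uniform on F_2^{mq} and S uniform on F_2^{q(m−1)}, with X, R, S mutually independent, and write (W, Z) = RE_M(X; R, S). Then for every w ∈ F_2^{mq}, the conditional Shannon entropy of Z given the event W = w satisfies H(Z | W = w) = q(m−1) + H(MX). -/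
open Finset

open scoped ENNReal

/-- Shannon entropy in bits of a probability mass function on a finite type,
with the convention `0·log₂ 0 = 0`. -/
noncomputable def shannonEntropy {α : Type*} [Fintype α] (p : PMF α) : ℝ :=
  -∑ a, ((p a).toReal * Real.logb 2 (p a).toReal)

/-- Shannon entropy in bits of a probability mass function given as a real
valued function on a finite type. -/
noncomputable def shannonEntropyFun {α : Type*} [Fintype α] (p : α → ℝ) : ℝ :=
  -∑ a, (p a * Real.logb 2 (p a))

lemma zmod2_add_self (a : ZMod 2) : a + a = 0 := CharTwo.add_self_eq_zero a

lemma sBext_zero (m : ℕ) {q : ℕ} (s : Fin q → Fin (m - 1) → ZMod 2) (i : Fin q) :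
    sBext m s i 0 = 0 := by simp [sBext]

lemma sBext_last (m : ℕ) {q : ℕ} (hm : 1 ≤ m) (s : Fin q → Fin (m - 1) → ZMod 2) (i : Fin q) :
    sBext m s i m = 0 := by
  unfold sBext
  rw [dif_neg]
  omega

def Dfun (m : ℕ) {q : ℕ} (s : Fin q → Fin (m - 1) → ZMod 2) (i : Fin q) (j : Fin m) : ZMod 2 :=
  sBext m s i (j : ℕ) + sBext m s i ((j : ℕ) + 1)

lemma Dfun_sum {m q : ℕ} (hm : 1 ≤ m) (s : Fin q → Fin (m - 1) → ZMod 2) (i : Fin q) :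
    ∑ j, Dfun m s i j = 0 := by
  have h : ∀ n : ℕ, ∑ k ∈ Finset.range n, (sBext m s i k + sBext m s i (k + 1))
      = sBext m s i n := by
    intro n
    induction n with
    | zero => simp [sBext_zero]
    | succ n ih =>
      rw [Finset.sum_range_succ, ih, ← add_assoc, zmod2_add_self, zero_add]
  unfold Dfun
  rw [Fin.sum_univ_eq_sum_range (fun k => sBext m s i k + sBext m s i (k + 1)) m, h,
    sBext_last m hm]

lemma Dfun_inj {m q : ℕ} (s s' : Fin q → Fin (m - 1) → ZMod 2)
    (h : Dfun m s = Dfun m s') : s = s' := by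
  have key : ∀ i : Fin q, ∀ k : ℕ, k ≤ m → sBext m s i k = sBext m s' i k := by
    intro i k
    induction k with
    | zero => intro _; simp [sBext_zero]
    | succ k ih =>
      intro hk
      have h1 := congrFun (congrFun h i) ⟨k, by omega⟩
      simp only [Dfun] at h1
      rw [ih (by omega)] at h1
      exact add_left_cancel h1
  funext i j
  have h2 := key i (j + 1) (by omega)
  have hj : 1 ≤ (j : ℕ) + 1 ∧ (j : ℕ) + 1 ≤ m - 1 := by omega
  simpa [sBext, hj] using h2

def Psi {m q : ℕ} (hm : 1 ≤ m) (p : (Fin q → ZMod 2) × (Fin q → Fin (m - 1) → ZMod 2)) :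
    Fin q → Fin m → ZMod 2 :=
  fun i j => Dfun m p.2 i j + (if j = ⟨0, hm⟩ then p.1 i else 0)

lemma Psi_sum {m q : ℕ} (hm : 1 ≤ m) (p : (Fin q → ZMod 2) × (Fin q → Fin (m - 1) → ZMod 2))
    (i : Fin q) : ∑ j, Psi hm p i j = p.1 i := by
  simp [Psi, Finset.sum_add_distrib, Dfun_sum hm]

lemma Psi_bij {m q : ℕ} (hm : 1 ≤ m) : Function.Bijective (Psi (q := q) hm) := by
  rw [Fintype.bijective_iff_injective_and_card]
  constructor
  · intro p p' h
    have h1 : p.1 = p'.1 := by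
      funext i
      rw [← Psi_sum hm p i, ← Psi_sum hm p' i, h]
    refine Prod.ext h1 (Dfun_inj _ _ ?_)
    funext i j
    have := congrFun (congrFun h i) j
    simp only [Psi, h1] at this
    exact add_right_cancel this
  · obtain ⟨n, rfl⟩ : ∃ n, m = n + 1 := ⟨m - 1, by omega⟩
    simp [ZMod.card]
    ring

lemma REw_inj {m q : ℕ} (x : Fin m → ZMod 2) :
    Function.Injective (REw (q := q) x) := by
  intro r r' h
  funext j i
  obtain ⟨k, hk⟩ := i
  induction k with
  | zero =>
    have := congrFun (congrFun h j) ⟨0, hk⟩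
    simpa [REw] using this
  | succ k ih =>
    have := congrFun (congrFun h j) ⟨k + 1, hk⟩
    have h2 := ih (by omega)
    simp [REw, h2] at this
    exact this

lemma REw_exists {m q : ℕ} (w : Fin m → Fin q → ZMod 2) :
    ∃ r1 : Fin m → Fin q → ZMod 2, ∀ x r, REw x r = w ↔ r = fun j i => x j + r1 j i := by
  obtain ⟨r1, h1⟩ := (Finite.injective_iff_surjective.1 (REw_inj (q := q) (0 : Fin m → ZMod 2))) w
  refine ⟨r1, fun x r => ?_⟩
  have : REw x (fun j i => x j + r1 j i) = w := by
    rw [← h1]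
    funext j i
    simp only [REw]
    split_ifs
    · rw [← add_assoc, zmod2_add_self]; rfl
    · have := zmod2_add_self (x j)
      linear_combination this
  constructor
  · intro h
    exact REw_inj x (h.trans this.symm)
  · rintro rfl
    exact this

lemma REz_count {m q : ℕ} (hm : 1 ≤ m) (M : Fin q → Fin m → ZMod 2) (r : Fin m → Fin q → ZMod 2)
    (z : Fin q → Fin m → ZMod 2) (c : ℝ≥0∞) :
    (∑ s : Fin q → Fin (m - 1) → ZMod 2, if z = REz M r s then c else 0) =
      if (fun i => ∑ j, z i j) = (fun i => ∑ j, M i j * r j i) then c else 0 := by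
  have hz : ∀ s, z = REz M r s ↔ (fun i j => z i j + M i j * r j i) = Dfun m s := by
    intro s
    constructor
    · intro h
      funext i j
      have := congrFun (congrFun h i) j
      rw [this]
      have h2 := zmod2_add_self (M i j * r j i)
      simp only [REz, Dfun]
      linear_combination h2
    · intro h
      funext i j
      have := congrFun (congrFun h i) j
      have h2 := zmod2_add_self (M i j * r j i)
      simp only [REz, Dfun] at this ⊢
      linear_combination this - h2
  have hs : ∀ a b : ZMod 2, a = b ↔ a + b = 0 := by decide
  have hsum : ((fun i => ∑ j, z i j) = (fun i => ∑ j, M i j * r j i)) ↔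
      ∀ i, ∑ j, (z i j + M i j * r j i) = 0 := by
    rw [funext_iff]
    refine forall_congr' fun i => ?_
    rw [hs, Finset.sum_add_distrib]
  simp only [hz, hsum]
  split_ifs with h
  · obtain ⟨⟨v, s0⟩, hp⟩ := (Psi_bij hm).2 (fun i j => z i j + M i j * r j i)
    have hv : v = 0 := by
      funext i
      have h3 := Psi_sum hm (v, s0) i
      rw [hp] at h3
      exact h3.symm.trans (h i)
    have hD : (fun i j => z i j + M i j * r j i) = Dfun m s0 := by
      rw [← hp, hv]
      funext i j
      simp [Psi]
    rw [Finset.sum_eq_single s0]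
    · rw [if_pos hD]
    · intro b _ hb
      rw [if_neg]
      intro hb2
      exact hb (Dfun_inj _ _ (hb2.symm.trans hD))
    · simp
  · apply Finset.sum_eq_zero
    intro s _
    rw [if_neg]
    intro hs2
    apply h
    intro i
    rw [← Dfun_sum hm s i, ← hs2]

lemma gamma_formula {m q : ℕ} (hm : 1 ≤ m)
    (M : Fin q → Fin m → ZMod 2) (μ : PMF (Fin m → ZMod 2))
    (w : Fin m → Fin q → ZMod 2) :
    ∃ (c : ℝ≥0∞) (d : Fin q → ZMod 2), c ≠ 0 ∧ c ≠ ⊤ ∧ ∀ z,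
      ((pmfProd μ (pmfProd (PMF.uniformOfFintype (Fin m → Fin q → ZMod 2))
              (PMF.uniformOfFintype (Fin q → Fin (m - 1) → ZMod 2)))).map
          (fun xrs => (REw xrs.1 xrs.2.1, REz M xrs.2.1 xrs.2.2))) (w, z) =
      c * (μ.map fun x => fun i : Fin q => ∑ j, M i j * x j) (fun i => ∑ j, z i j + d i) := by
  obtain ⟨r1, hr⟩ := REw_exists w
  refine ⟨((Fintype.card (Fin m → Fin q → ZMod 2) : ℝ≥0∞))⁻¹ *
    ((Fintype.card (Fin q → Fin (m - 1) → ZMod 2) : ℝ≥0∞))⁻¹,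
    fun i => ∑ j, M i j * r1 j i, ?_, ?_, ?_⟩
  · exact mul_ne_zero (ENNReal.inv_ne_zero.2 (ENNReal.natCast_ne_top _))
      (ENNReal.inv_ne_zero.2 (ENNReal.natCast_ne_top _))
  · refine ENNReal.mul_ne_top (ENNReal.inv_ne_top.2 ?_) (ENNReal.inv_ne_top.2 ?_) <;>
    exact Nat.cast_ne_zero.2 Fintype.card_ne_zero
  intro z
  simp only [pmfProd, PMF.map_bind, PMF.map_comp]
  rw [PMF.bind_apply, tsum_fintype, PMF.map_apply, tsum_fintype, Finset.mul_sum]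
  refine Finset.sum_congr rfl fun x _ => ?_
  rw [PMF.bind_apply, tsum_fintype]
  have h1 : ∀ r : Fin m → Fin q → ZMod 2,
      (PMF.map ((fun xrs : (Fin m → ZMod 2) × (Fin m → Fin q → ZMod 2) ×
          (Fin q → Fin (m - 1) → ZMod 2) => (REw xrs.1 xrs.2.1, REz M xrs.2.1 xrs.2.2)) ∘
          (fun b => (x, b)) ∘ fun b => (r, b))
        (PMF.uniformOfFintype (Fin q → Fin (m - 1) → ZMod 2))) (w, z) =
      if r = (fun j i => x j + r1 j i) then
        (if (fun i => ∑ j, z i j) = (fun i => ∑ j, M i j * r j i) then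
          ((Fintype.card (Fin q → Fin (m - 1) → ZMod 2) : ℝ≥0∞))⁻¹ else 0) else 0 := by
    intro r
    rw [PMF.map_apply, tsum_fintype]
    simp only [Function.comp, Prod.mk.injEq, PMF.uniformOfFintype_apply]
    rw [← REz_count hm]
    simp only [← hr]
    split_ifs with h
    · refine Finset.sum_congr rfl fun s _ => ?_
      simp [h]
    · apply Finset.sum_eq_zero
      intro s _
      rw [if_neg]
      rintro ⟨h2, _⟩
      exact h h2.symm
  simp only [Function.comp_assoc, h1, PMF.uniformOfFintype_apply, mul_ite, mul_zero,
    Finset.sum_ite_eq', Finset.mem_univ, if_true]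
  have hs : ∀ a b c : ZMod 2, a = b + c ↔ a + c = b := by decide
  have h3 : ((fun i => ∑ j, z i j) = (fun i => ∑ j, M i j * (x j + r1 j i))) ↔
      ((fun i => ∑ j, z i j + ∑ j, M i j * r1 j i) = fun i => ∑ j, M i j * x j) := by
    rw [funext_iff, funext_iff]
    refine forall_congr' fun i => ?_
    rw [← hs, ← Finset.sum_add_distrib]
    simp only [mul_add]
  simp only [h3]
  split_ifs
  · ring
  · rfl

lemma sum_fiber {m q : ℕ} {A : Type*} [AddCommMonoid A] (hm : 1 ≤ m) (d : Fin q → ZMod 2)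
    (f : (Fin q → ZMod 2) → A) :
    ∑ z : Fin q → Fin m → ZMod 2, f (fun i => ∑ j, z i j + d i) =
      (2 ^ (q * (m - 1))) • ∑ v, f v := by
  rw [← (Psi_bij (q := q) hm).sum_comp, Fintype.sum_prod_type_right]
  simp only [Psi_sum]
  have : ∀ v : Fin q → ZMod 2, (fun i => v i + d i) = Equiv.addRight d v := fun v => rfl
  simp only [this, Equiv.sum_comp (Equiv.addRight d) f]
  rw [Finset.sum_const, Finset.card_univ]
  congr 1
  simp [ZMod.card]
  ring

/-- Conditional entropy of the z-register given the
w-register: with `X, R, S` mutually independent (`R, S` uniform) and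
`(W, Z) = RE_M(X; R, S)`, for every `w ∈ F_2^{mq}` one has
`H(Z | W = w) = q(m−1) + H(MX)`, where `H(Z | W = w)` is the Shannon entropy
of the conditional distribution of `Z` given the event `W = w`. -/
theorem conditional_entropy_z_given_w {m q : ℕ} (hm : 1 ≤ m) (hq : 1 ≤ q)
    (M : Fin q → Fin m → ZMod 2) (μ : PMF (Fin m → ZMod 2))
    (γ : PMF ((Fin m → Fin q → ZMod 2) × (Fin q → Fin m → ZMod 2)))
    (hγ : γ = (pmfProd μ (pmfProd (PMF.uniformOfFintype (Fin m → Fin q → ZMod 2))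
              (PMF.uniformOfFintype (Fin q → Fin (m - 1) → ZMod 2)))).map
          (fun xrs => (REw xrs.1 xrs.2.1, REz M xrs.2.1 xrs.2.2))) :
    ∀ w : Fin m → Fin q → ZMod 2,
      shannonEntropyFun
          (fun z : Fin q → Fin m → ZMod 2 =>
            (γ (w, z) / ∑ z' : Fin q → Fin m → ZMod 2, γ (w, z')).toReal)
        = (q * (m - 1) : ℕ) +
            shannonEntropy (μ.map fun x => fun i : Fin q => ∑ j, M i j * x j) := by
  intro w
  obtain ⟨c, d, hc0, hct, hg⟩ := gamma_formula hm M μ w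
  rw [← hγ] at hg
  set ν := μ.map fun x => fun i : Fin q => ∑ j, M i j * x j with hν
  have hsum : ∑ v, ν v = 1 := by rw [← tsum_fintype (L := .unconditional _)]; exact ν.tsum_coe
  have htot : ∑ z', γ (w, z') = c * 2 ^ (q * (m - 1)) := by
    simp only [hg]
    rw [← Finset.mul_sum, sum_fiber hm d (fun v => ν v), hsum]
    simp
  have hcond : ∀ z, (γ (w, z) / ∑ z' : Fin q → Fin m → ZMod 2, γ (w, z')).toReal
      = (ν (fun i => ∑ j, z i j + d i)).toReal / 2 ^ (q * (m - 1)) := by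
    intro z
    rw [htot, hg, ENNReal.mul_div_mul_left _ _ hc0 hct, ENNReal.toReal_div]
    simp
  have hsumR : ∑ v, (ν v).toReal = 1 := by
    rw [← ENNReal.toReal_sum (fun v _ => ν.apply_ne_top v), hsum]; simp
  unfold shannonEntropyFun shannonEntropy
  simp only [hcond]
  rw [sum_fiber hm d (fun v => (ν v).toReal / 2 ^ (q * (m - 1)) *
    Real.logb 2 ((ν v).toReal / 2 ^ (q * (m - 1)))), nsmul_eq_mul, Finset.mul_sum]
  have hterm : ∀ v, ((2 ^ (q * (m - 1)) : ℕ) : ℝ) * ((ν v).toReal / 2 ^ (q * (m - 1)) *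
      Real.logb 2 ((ν v).toReal / 2 ^ (q * (m - 1)))) =
      (ν v).toReal * Real.logb 2 (ν v).toReal - (ν v).toReal * (q * (m - 1) : ℕ) := by
    intro v
    have h2 : (2 : ℝ) ^ (q * (m - 1)) ≠ 0 := by positivity
    by_cases h : (ν v).toReal = 0
    · simp [h]
    · rw [Real.logb_div h h2, Real.logb_pow, Real.logb_self_eq_one (by norm_num), mul_one,
        Nat.cast_pow, Nat.cast_ofNat, ← mul_assoc, mul_div_cancel₀ _ h2, mul_sub]
  simp only [hterm]
  rw [Finset.sum_sub_distrib, ← Finset.sum_mul, hsumR]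
  ring
end

section
/- Injectivity of the randomized encoding in its randomness: fix a matrix M ∈ F_2^{q×m} and an input x ∈ F_2^m. Then the map (r, s) ↦ RE_M(x; r, s) is injective: if RE_M(x; r, s) = RE_M(x; r', s') then r = r' and s = s'. Concretely, the w-part determines r via r_{j,i} = x_j ⊕ a_{j,i}(w), and then each row of s is determined from the corresponding row of z by the recurrence s_{i,j} = z_{i,j} ⊕ s_{i,j−1} ⊕ M_{i,j}·r_{j,i} with s_{i,0} = 0. -/
open Finset

/-- Injectivity of the randomized encoding in its
randomness: for fixed `M` and input `x`, if `RE_M(x; r, s) = RE_M(x; r', s')`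
then `r = r'` and `s = s'`. -/
theorem injective_in_randomness {m q : ℕ} (hm : 1 ≤ m) (hq : 1 ≤ q)
    (M : Fin q → Fin m → ZMod 2) (x : Fin m → ZMod 2)
    (r r' : Fin m → Fin q → ZMod 2) (s s' : Fin q → Fin (m - 1) → ZMod 2)
    (hw : REw x r = REw x r') (hz : REz M r s = REz M r' s') :
    r = r' ∧ s = s' := by
  have hr : r = r' := by
    funext j i
    obtain ⟨i, hi⟩ := i
    induction i with
    | zero =>
      have h := congrFun (congrFun hw j) ⟨0, hi⟩
      simpa [REw] using h
    | succ n ih =>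
      have h := congrFun (congrFun hw j) ⟨n + 1, hi⟩
      have h2 := ih (by omega)
      simpa [REw, h2] using h
  subst hr
  refine ⟨rfl, ?_⟩
  have key : ∀ (i : Fin q) (k : ℕ), k ≤ m → sBext m s i k = sBext m s' i k := by
    intro i k
    induction k with
    | zero => intro _; simp [sBext]
    | succ n ih =>
      intro hn
      have h := congrFun (congrFun hz i) ⟨n, by omega⟩
      have h2 := ih (by omega)
      simpa only [REz, h2, add_left_inj, add_right_inj] using h
  funext i k
  have hk := k.isLt
  have h := key i (k + 1) (by omega)
  have hc : 1 ≤ (k : ℕ) + 1 ∧ (k : ℕ) + 1 ≤ m - 1 := by omega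
  simpa only [sBext, dif_pos hc, Nat.add_sub_cancel, Fin.eta] using h
end

section
/- Colliding encodings have equal syndromes: fix a matrix M ∈ F_2^{q×m}. If two inputs v, v' ∈ F_2^m and mask values r, s and r', s' satisfy RE_M(v; r, s) = RE_M(v'; r', s'), then Mv = Mv'. -/
open Finset

theorem aux_z {m q : ℕ} (hm : 1 ≤ m) (M : Fin q → Fin m → ZMod 2)
    (r : Fin m → Fin q → ZMod 2) (s : Fin q → Fin (m - 1) → ZMod 2) (i : Fin q) :
    ∑ j, REz M r s i j = ∑ j, M i j * r j i := by
  have h2 : ∀ a b : ZMod 2, a + b = b - a := by decide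
  have h : ∑ j : Fin m, (sBext m s i (j : ℕ) + sBext m s i ((j : ℕ) + 1)) = 0 := by
    rw [Fin.sum_univ_eq_sum_range (fun k => sBext m s i k + sBext m s i (k + 1)) m]
    simp only [h2]
    rw [Finset.sum_range_sub]
    have h0 : sBext m s i 0 = 0 := by simp [sBext]
    have h1 : sBext m s i m = 0 := by
      unfold sBext
      rw [dif_neg (by omega)]
    rw [h0, h1, sub_zero]
  simp only [REz]
  rw [Finset.sum_add_distrib, h, zero_add]

theorem aux_w {m q : ℕ} (v v' : Fin m → ZMod 2) (r r' : Fin m → Fin q → ZMod 2)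
    (h : REw v r = REw v' r') (j : Fin m) :
    ∀ (k : ℕ) (hk : k < q), v j - v' j = r j ⟨k, hk⟩ - r' j ⟨k, hk⟩ := by
  have key : ∀ a b c d : ZMod 2, a + b = c + d → a - c = b - d := by decide
  intro k
  induction k with
  | zero =>
    intro hk
    have := congrFun (congrFun h j) ⟨0, hk⟩
    simp only [REw, if_true] at this
    exact key _ _ _ _ this
  | succ k ih =>
    intro hk
    have := congrFun (congrFun h j) ⟨k + 1, hk⟩
    simp only [REw, Nat.succ_ne_zero, if_false, Nat.add_sub_cancel] at this
    rw [ih (by omega)]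
    exact key _ _ _ _ this

/-- Colliding encodings have equal syndromes: if two inputs
`v, v'` and masks `r, s` and `r', s'` satisfy
`RE_M(v; r, s) = RE_M(v'; r', s')`, then `Mv = Mv'`. -/
theorem colliding_encodings_equal_syndromes {m q : ℕ} (hm : 1 ≤ m) (hq : 1 ≤ q)
    (M : Fin q → Fin m → ZMod 2) (v v' : Fin m → ZMod 2)
    (r r' : Fin m → Fin q → ZMod 2) (s s' : Fin q → Fin (m - 1) → ZMod 2)
    (hcol : (REw v r, REz M r s) = (REw v' r', REz M r' s')) :
    ∀ i : Fin q, ∑ j, M i j * v j = ∑ j, M i j * v' j := by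
  intro i
  obtain ⟨hw, hz⟩ := Prod.mk.inj hcol
  have e : ∑ j, M i j * r j i = ∑ j, M i j * r' j i := by
    rw [← aux_z hm M r s i, ← aux_z hm M r' s' i, hz]
  rw [← sub_eq_zero, ← Finset.sum_sub_distrib] at e ⊢
  rw [← e]
  refine Finset.sum_congr rfl fun j _ => ?_
  rw [← mul_sub, ← mul_sub, aux_w v v' r r' hw j i i.isLt]
end
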